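/- If a family ℱ of 3-graphs does not satisfy a palette 𝒫 (i.e., no member of ℱ satisfies 𝒫), then π_{e↦v}(ℱ) ≥ Λ^{e↦v}_𝒫. -/

import Mathlib

/-!
Given a weighting `x` of the palette `P`, colour the pairs of `{0, …, n - 1}` independently at
random, using colour `a` with probability `x a`, and let the edges be the triples `i < j < k` whose
colour pattern `(ψ i j, ψ j k, ψ i k)` lies in `P` (`paletteGraph`). Every subhypergraph of this
3-graph satisfies `P` (`satisfies_of_isSubhypergraph`), so no member of `𝓕` occurs in it. It remains
to see that it is `(lamEV P x, η, e↦v)`-dense for a suitable outcome and large `n`.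

The required quasirandomness is that, for each colour `c`, the matrix
`𝟙[i < j] (𝟙[ψ i j = c] - x c)` has cut norm at most `ε n²` (`exists_colouring`). By Cauchy–Schwarz,
the fourth power of the cut norm is at most `n⁴` times the four-cycle count (`sum_pow_four_le`),
whose mean is at most `2 n³` because the mean of a product over a nondegenerate four-cycle vanishes
(`sum_weight_fourCycle_le`). These counts are nonnegative, so an average outcome bounds them for all
colours at once. Averages are taken as finite sums weighted by the product distribution.

Fix a vertex set `X` and a set of pairs `R`. For a pair `y < z` of colour `a` the vertex `x` is below,
between or above, so `a` is the middle, last or first entry of the palette triple. In each case the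
count is a sum over `x, y, z` of `𝟙[x ∈ X]`, a weight depending on `(y, z)`, and the colour
indicators of `x y` and `x z`. Cut norm bounds replace the last two by their densities
(`CutBound.triple`, `position_bound`): fixing `z` leaves a bilinear form in the indicator of `x y`,
with everything else, including the dependence on `R`, a bounded function of `x` times one of `y`.
Since only colours with positive weight are used, each case contributes density at least
`lamEV P x` (`isDenseEV_paletteGraph`).
-/

open Finset

/-- A 3-uniform hypergraph: a finite vertex set (of naturals) together with a set of
3-element subsets of it as edges. -/
structure ThreeGraph where
  verts : Finset ℕ
  edges : Finset (Finset ℕ)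
  edge_sub : ∀ e ∈ edges, e ⊆ verts
  edge_card : ∀ e ∈ edges, e.card = 3

/-- `F` occurs as a subhypergraph of `H`. -/
def IsSubhypergraph (F H : ThreeGraph) : Prop :=
  ∃ f : ℕ → ℕ, Set.InjOn f ↑F.verts ∧ (∀ v ∈ F.verts, f v ∈ H.verts) ∧
    ∀ e ∈ F.edges, e.image f ∈ H.edges

noncomputable section

/-- Number of triples `(x,y,z) ∈ X × Y × Z` with `{x,y,z}` an edge of `H`. -/
def eVVV (H : ThreeGraph) (X Y Z : Finset ℕ) : ℕ :=
  ((X ×ˢ Y ×ˢ Z).filter fun p => ({p.1, p.2.1, p.2.2} : Finset ℕ) ∈ H.edges).card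

/-- `H` is `(d,η,▽)`-dense. -/
def IsDenseVVV (H : ThreeGraph) (d η : ℝ) : Prop :=
  ∀ X Y Z : Finset ℕ, X ⊆ H.verts → Y ⊆ H.verts → Z ⊆ H.verts →
    (eVVV H X Y Z : ℝ) ≥ d * X.card * Y.card * Z.card - η * (H.verts.card : ℝ) ^ 3

/-- Number of ordered triples `(x,y,z)` with `x ∈ X`, `{y,z} ∈ P` and `{x,y,z}` an edge. -/
def eEV (H : ThreeGraph) (X : Finset ℕ) (P : Finset (Finset ℕ)) : ℕ :=
  ((X ×ˢ H.verts ×ˢ H.verts).filter fun p =>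
    ({p.2.1, p.2.2} : Finset ℕ) ∈ P ∧ ({p.1, p.2.1, p.2.2} : Finset ℕ) ∈ H.edges).card

/-- `H` is `(d,η,e↦v)`-dense. -/
def IsDenseEV (H : ThreeGraph) (d η : ℝ) : Prop :=
  ∀ (X : Finset ℕ) (P : Finset (Finset ℕ)), X ⊆ H.verts →
    (∀ p ∈ P, p ⊆ H.verts ∧ p.card = 2) →
    (eEV H X P : ℝ) ≥ d * X.card * P.card - η * (H.verts.card : ℝ) ^ 3

/-- `K_{ee}(P,Q)`: ordered triples `(x,y,z)` with `{x,y} ∈ P` and `{y,z} ∈ Q`. -/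
def KEE (H : ThreeGraph) (P Q : Finset (Finset ℕ)) : Finset (ℕ × ℕ × ℕ) :=
  (H.verts ×ˢ H.verts ×ˢ H.verts).filter fun p =>
    ({p.1, p.2.1} : Finset ℕ) ∈ P ∧ ({p.2.1, p.2.2} : Finset ℕ) ∈ Q

/-- Number of triples in `K_{ee}(P,Q)` forming an edge of `H`. -/
def eEE (H : ThreeGraph) (P Q : Finset (Finset ℕ)) : ℕ :=
  ((KEE H P Q).filter fun p => ({p.1, p.2.1, p.2.2} : Finset ℕ) ∈ H.edges).card

/-- `H` is `(d,η,ee)`-dense. -/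
def IsDenseEE (H : ThreeGraph) (d η : ℝ) : Prop :=
  ∀ P Q : Finset (Finset ℕ),
    (∀ p ∈ P, p ⊆ H.verts ∧ p.card = 2) → (∀ q ∈ Q, q ⊆ H.verts ∧ q.card = 2) →
    (eEE H P Q : ℝ) ≥ d * (KEE H P Q).card - η * (H.verts.card : ℝ) ^ 3

/-- The uniform Turán density `π_▽(𝓕)` of a family `𝓕` of 3-graphs. -/
def piVVV (𝓕 : Set ThreeGraph) : ℝ :=
  sSup {d : ℝ | 0 ≤ d ∧ d ≤ 1 ∧ ∀ η : ℝ, 0 < η → ∀ n : ℕ,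
    ∃ H : ThreeGraph, n ≤ H.verts.card ∧ (∀ F ∈ 𝓕, ¬ IsSubhypergraph F H) ∧
      IsDenseVVV H d η}

/-- The uniform Turán density `π_{e↦v}(𝓕)` of a family `𝓕` of 3-graphs. -/
def piEV (𝓕 : Set ThreeGraph) : ℝ :=
  sSup {d : ℝ | 0 ≤ d ∧ d ≤ 1 ∧ ∀ η : ℝ, 0 < η → ∀ n : ℕ,
    ∃ H : ThreeGraph, n ≤ H.verts.card ∧ (∀ F ∈ 𝓕, ¬ IsSubhypergraph F H) ∧
      IsDenseEV H d η}

/-- The uniform Turán density `π_{ee}(𝓕)` of a family `𝓕` of 3-graphs. -/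
def piEE (𝓕 : Set ThreeGraph) : ℝ :=
  sSup {d : ℝ | 0 ≤ d ∧ d ≤ 1 ∧ ∀ η : ℝ, 0 < η → ∀ n : ℕ,
    ∃ H : ThreeGraph, n ≤ H.verts.card ∧ (∀ F ∈ 𝓕, ¬ IsSubhypergraph F H) ∧
      IsDenseEE H d η}

/-- A palette: a finite set of ordered triples of natural numbers (colours). -/
abbrev Palette := Finset (ℕ × ℕ × ℕ)

/-- The set of colours `Φ(𝒫)` of a palette. -/
def palColours (P : Palette) : Finset ℕ :=
  P.image (·.1) ∪ P.image (·.2.1) ∪ P.image (·.2.2)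

/-- A weighting of a palette: nonnegative weights on the colours summing to 1. -/
def IsWeighting (P : Palette) (x : ℕ → ℝ) : Prop :=
  (∀ a ∈ palColours P, 0 ≤ x a) ∧ ∑ a ∈ palColours P, x a = 1

/-- `λ^▽_𝒫(x) = Σ_{(a,b,c) ∈ 𝒫} x_a x_b x_c`. -/
def lamVVV (P : Palette) (x : ℕ → ℝ) : ℝ :=
  ∑ p ∈ P, x p.1 * x p.2.1 * x p.2.2

/-- The palette Lagrangian `Λ^▽_𝒫`. -/
def LambdaVVV (P : Palette) : ℝ :=
  sSup {l : ℝ | ∃ x : ℕ → ℝ, IsWeighting P x ∧ l = lamVVV P x}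

/-- The ordered degree Lagrangian `λ^a_𝒫(x)`. -/
def lamDeg (P : Palette) (a : ℕ) (x : ℕ → ℝ) : ℝ :=
  min (min (∑ p ∈ P.filter (fun p => p.1 = a), x p.2.1 * x p.2.2)
           (∑ p ∈ P.filter (fun p => p.2.1 = a), x p.1 * x p.2.2))
      (∑ p ∈ P.filter (fun p => p.2.2 = a), x p.1 * x p.2.1)

/-- `λ^{e↦v}_𝒫(x)`: minimum of `λ^a_𝒫(x)` over colours `a` with positive weight. -/
def lamEV (P : Palette) (x : ℕ → ℝ) : ℝ :=
  sInf {l : ℝ | ∃ a ∈ palColours P, 0 < x a ∧ l = lamDeg P a x}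

/-- The palette Lagrangian `Λ^{e↦v}_𝒫`. -/
def LambdaEV (P : Palette) : ℝ :=
  sSup {l : ℝ | ∃ x : ℕ → ℝ, IsWeighting P x ∧ l = lamEV P x}

/-- The ordered codegree Lagrangian `λ^{a,b}_𝒫(x)`. -/
def lamCodeg (P : Palette) (a b : ℕ) (x : ℕ → ℝ) : ℝ :=
  min (min (min (∑ p ∈ P.filter (fun p => p.1 = a ∧ p.2.1 = b), x p.2.2)
                (∑ p ∈ P.filter (fun p => p.1 = b ∧ p.2.1 = a), x p.2.2))
           (min (∑ p ∈ P.filter (fun p => p.1 = a ∧ p.2.2 = b), x p.2.1)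
                (∑ p ∈ P.filter (fun p => p.1 = b ∧ p.2.2 = a), x p.2.1)))
      (min (∑ p ∈ P.filter (fun p => p.2.1 = a ∧ p.2.2 = b), x p.1)
           (∑ p ∈ P.filter (fun p => p.2.1 = b ∧ p.2.2 = a), x p.1))

/-- `λ^{ee}_𝒫(x)`: minimum of `λ^{a,b}_𝒫(x)` over colours `a,b` with positive weight. -/
def lamEE (P : Palette) (x : ℕ → ℝ) : ℝ :=
  sInf {l : ℝ | ∃ a ∈ palColours P, ∃ b ∈ palColours P, 0 < x a * x b ∧ l = lamCodeg P a b x}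

/-- The palette Lagrangian `Λ^{ee}_𝒫`. -/
def LambdaEE (P : Palette) : ℝ :=
  sSup {l : ℝ | ∃ x : ℕ → ℝ, IsWeighting P x ∧ l = lamEE P x}

/-- A 3-graph `H` satisfies a palette `P`: there is an ordering of the vertices (an
injection `ord` into `ℕ`) and a colouring `φ` of the pairs of vertices with colours in
`Φ(P)` such that the ordered shadow of every edge is a triple of the palette. -/
def Satisfies (H : ThreeGraph) (P : Palette) : Prop :=
  ∃ (ord : ℕ → ℕ) (φ : Finset ℕ → ℕ),
    Set.InjOn ord ↑H.verts ∧
    (∀ u ∈ H.verts, ∀ v ∈ H.verts, u ≠ v → φ {u, v} ∈ palColours P) ∧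
    ∀ u v w : ℕ, ({u, v, w} : Finset ℕ) ∈ H.edges →
      ord u < ord v → ord v < ord w →
      (φ {u, v}, φ {v, w}, φ {u, w}) ∈ P

/-- Delete a set of edges from a 3-graph. -/
def ThreeGraph.deleteEdges (H : ThreeGraph) (R : Finset (Finset ℕ)) : ThreeGraph where
  verts := H.verts
  edges := H.edges \ R
  edge_sub := fun e he => H.edge_sub e (Finset.mem_sdiff.mp he).1
  edge_card := fun e he => H.edge_card e (Finset.mem_sdiff.mp he).1

/-- `H` α-almost satisfies `P`: one can remove at most `α·|V(H)|³` edges so that the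
resulting 3-graph satisfies `P`. -/
def AlmostSatisfies (H : ThreeGraph) (P : Palette) (α : ℝ) : Prop :=
  ∃ R ⊆ H.edges, (R.card : ℝ) ≤ α * (H.verts.card : ℝ) ^ 3 ∧
    Satisfies (H.deleteEdges R) P

/-- The Lagrange polynomial `λ_F(x) = 3! Σ_{e ∈ E(F)} Π_{v ∈ e} x_v` of a 3-graph. -/
def lagrangePoly (F : ThreeGraph) (x : ℕ → ℝ) : ℝ :=
  6 * ∑ e ∈ F.edges, ∏ v ∈ e, x v

/-- The Lagrangian `Λ_F` of a 3-graph: the supremum of the Lagrange polynomial over the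
standard simplex on the vertices. -/
def lagrangian (F : ThreeGraph) : ℝ :=
  sSup {l : ℝ | ∃ x : ℕ → ℝ, (∀ v ∈ F.verts, 0 ≤ x v ∧ x v ≤ 1) ∧
    (∑ v ∈ F.verts, x v = 1) ∧ l = lagrangePoly F x}

end

/-! ### Cut norms and four-cycle counts -/

/-- The `n × n` matrix `A` has cut norm at most `δ`. Test vectors range over `[-1, 1]`-valued
functions rather than over sets, which lets further bounded factors be absorbed into them. -/
def CutBound (n : ℕ) (δ : ℝ) (A : ℕ → ℕ → ℝ) : Prop :=
  ∀ u v : ℕ → ℝ, (∀ i, |u i| ≤ 1) → (∀ j, |v j| ≤ 1) →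
    |∑ i ∈ range n, ∑ j ∈ range n, A i j * u i * v j| ≤ δ

theorem CutBound.transpose {n : ℕ} {δ : ℝ} {A : ℕ → ℕ → ℝ} (hA : CutBound n δ A) :
    CutBound n δ (fun i j => A j i) := by
  intro u v hu hv
  rw [Finset.sum_comm]
  have := hA v u hv hu
  refine le_trans (le_of_eq ?_) this
  refine congrArg _ (Finset.sum_congr rfl fun i _ => Finset.sum_congr rfl fun j _ => ?_)
  ring

/-- Two applications of Cauchy–Schwarz, first over rows and then over pairs of columns, bound
the cut norm by the count of weighted four-cycles. -/
theorem sum_pow_four_le (n : ℕ) (a : Fin n → Fin n → ℝ) (u v : Fin n → ℝ)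
    (hu : ∀ i, |u i| ≤ 1) (hv : ∀ j, |v j| ≤ 1) :
    (∑ i, ∑ j, a i j * u i * v j) ^ 4 ≤
      (n : ℝ) ^ 4 * ∑ j, ∑ j', (∑ i, a i j * a i j') ^ 2 := by
  set r : Fin n → ℝ := fun i => ∑ j, a i j * v j with hr
  set R := ∑ i, r i ^ 2 with hR
  set Q := ∑ j, ∑ j', (∑ i, a i j * a i j') ^ 2 with hQ
  have hS : ∑ i, ∑ j, a i j * u i * v j = ∑ i, u i * r i := by
    refine Finset.sum_congr rfl fun i _ => ?_
    rw [hr, Finset.mul_sum]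
    exact Finset.sum_congr rfl fun j _ => by ring
  have hR0 : 0 ≤ R := Finset.sum_nonneg fun i _ => sq_nonneg _
  have h1 : (∑ i, u i * r i) ^ 2 ≤ n * R := by
    refine (Finset.sum_mul_sq_le_sq_mul_sq _ _ _).trans ?_
    refine mul_le_mul_of_nonneg_right ?_ hR0
    calc ∑ i, u i ^ 2 ≤ ∑ i : Fin n, (1 : ℝ) :=
          Finset.sum_le_sum fun i _ => (sq_le_one_iff_abs_le_one _).2 (hu i)
      _ = n := by simp
  have hRC : R = ∑ p : Fin n × Fin n, (v p.1 * v p.2) * ∑ i, a i p.1 * a i p.2 := by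
    rw [Fintype.sum_prod_type]
    simp only [hR, hr, sq, Finset.sum_mul_sum]
    rw [Finset.sum_comm]
    refine Finset.sum_congr rfl fun j _ => ?_
    simp only [Finset.mul_sum]
    rw [Finset.sum_comm]
    exact Finset.sum_congr rfl fun j' _ => Finset.sum_congr rfl fun i _ => by ring
  have hQ0 : 0 ≤ Q := Finset.sum_nonneg fun i _ => Finset.sum_nonneg fun i _ => sq_nonneg _
  have h2 : R ^ 2 ≤ (n : ℝ) ^ 2 * Q := by
    rw [hRC]
    refine (Finset.sum_mul_sq_le_sq_mul_sq _ _ _).trans ?_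
    rw [hQ, ← Fintype.sum_prod_type (f := fun p : Fin n × Fin n => (∑ i, a i p.1 * a i p.2) ^ 2)]
    refine mul_le_mul_of_nonneg_right ?_ (Finset.sum_nonneg fun i _ => sq_nonneg _)
    calc ∑ p : Fin n × Fin n, (v p.1 * v p.2) ^ 2 ≤ ∑ p : Fin n × Fin n, (1 : ℝ) := by
          refine Finset.sum_le_sum fun p _ => (sq_le_one_iff_abs_le_one _).2 ?_
          rw [abs_mul]
          exact mul_le_one₀ (hv _) (abs_nonneg _) (hv _)
      _ = (n : ℝ) ^ 2 := by simp [sq]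
  rw [hS]
  calc (∑ i, u i * r i) ^ 4 = ((∑ i, u i * r i) ^ 2) ^ 2 := by ring
    _ ≤ (n * R) ^ 2 := by gcongr
    _ = (n : ℝ) ^ 2 * R ^ 2 := by ring
    _ ≤ (n : ℝ) ^ 2 * ((n : ℝ) ^ 2 * Q) := by gcongr
    _ = _ := by ring

/-! ### A random colouring of the pairs -/

/-- The centred indicator that the pair `i < j` receives the colour `c`, and `0` when `j ≤ i`.
The colouring `ψ` carries a colour on all ordered pairs, but only those with `i < j` matter. -/
noncomputable def dev (w : ℕ → ℝ) {n : ℕ} (ψ : Fin n × Fin n → ℕ) (c : ℕ) (i j : Fin n) : ℝ :=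
  if i < j then (if ψ (i, j) = c then 1 else 0) - w c else 0

theorem abs_dev_le (w : ℕ → ℝ) {n : ℕ} (ψ : Fin n × Fin n → ℕ) (c : ℕ) (h0 : 0 ≤ w c)
    (h1 : w c ≤ 1) (i j : Fin n) : |dev w ψ c i j| ≤ 1 := by
  unfold dev
  split_ifs <;> rw [abs_le] <;> constructor <;> linarith

/-- Colour the elements of `ι` independently with law `w` on `S`. If `f` has mean zero and `e₁`
differs from the three other elements, then the expected product of the four values vanishes. -/
theorem sum_weight_mul {ι : Type*} [Fintype ι] [DecidableEq ι] (S : Finset ℕ) (w : ℕ → ℝ)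
    {e₁ e₂ e₃ e₄ : ι} (h₂ : e₁ ≠ e₂) (h₃ : e₁ ≠ e₃) (h₄ : e₁ ≠ e₄) (f : ℕ → ℝ)
    (hf : ∑ s ∈ S, w s * f s = 0) :
    ∑ ψ ∈ Fintype.piFinset (fun _ : ι => S),
      (∏ k, w (ψ k)) * (f (ψ e₁) * f (ψ e₂) * f (ψ e₃) * f (ψ e₄)) = 0 := by
  have key : ∀ ψ : ι → ℕ, (∏ k, w (ψ k)) * (f (ψ e₁) * f (ψ e₂) * f (ψ e₃) * f (ψ e₄)) =
      ∏ k, w (ψ k) * ((if k = e₁ then f (ψ k) else 1) * (if k = e₂ then f (ψ k) else 1) *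
        (if k = e₃ then f (ψ k) else 1) * (if k = e₄ then f (ψ k) else 1)) := by
    intro ψ
    simp only [Finset.prod_mul_distrib, Finset.prod_ite_eq', Finset.mem_univ, if_true]
  simp only [key]
  rw [← Finset.prod_univ_sum (fun _ : ι => S) (fun k s => w s * ((if k = e₁ then f s else 1) *
    (if k = e₂ then f s else 1) * (if k = e₃ then f s else 1) * (if k = e₄ then f s else 1)))]
  exact Finset.prod_eq_zero (Finset.mem_univ e₁) (by simpa [h₂, h₃, h₄] using hf)

/-- The weighted number of four-cycles of `dev w ψ c`, grouped by pairs of columns so that it is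
visibly nonnegative. -/
noncomputable def fourCycle (w : ℕ → ℝ) {n : ℕ} (ψ : Fin n × Fin n → ℕ) (c : ℕ) : ℝ :=
  ∑ j, ∑ j', (∑ i, dev w ψ c i j * dev w ψ c i j') ^ 2

theorem fourCycle_nonneg (w : ℕ → ℝ) {n : ℕ} (ψ : Fin n × Fin n → ℕ) (c : ℕ) :
    0 ≤ fourCycle w ψ c :=
  Finset.sum_nonneg fun _ _ => Finset.sum_nonneg fun _ _ => sq_nonneg _

/-- The expected four-cycle count of a random colouring is `O(n³)`: a term survives only if the
two rows or the two columns of the cycle coincide. -/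
theorem sum_weight_fourCycle_le (S : Finset ℕ) (w : ℕ → ℝ) (hw0 : ∀ s ∈ S, 0 ≤ w s)
    (hw1 : ∑ s ∈ S, w s = 1) (n : ℕ) {c : ℕ} (hc : c ∈ S) :
    ∑ ψ ∈ Fintype.piFinset (fun _ : Fin n × Fin n => S),
      (∏ k, w (ψ k)) * fourCycle w ψ c ≤ 2 * (n : ℝ) ^ 3 := by
  have hc1 : w c ≤ 1 := hw1 ▸ Finset.single_le_sum hw0 hc
  have hW0 : ∀ ψ ∈ Fintype.piFinset (fun _ : Fin n × Fin n => S), 0 ≤ ∏ k, w (ψ k) :=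
    fun ψ hψ => Finset.prod_nonneg fun k _ => hw0 _ (Fintype.mem_piFinset.1 hψ k)
  have hW1 : ∑ ψ ∈ Fintype.piFinset (fun _ : Fin n × Fin n => S), ∏ k, w (ψ k) = 1 := by
    rw [← Finset.prod_univ_sum (fun _ : Fin n × Fin n => S) (fun _ s => w s)]
    simp [hw1]
  have hterm : ∀ j j' i i' : Fin n,
      ∑ ψ ∈ Fintype.piFinset (fun _ : Fin n × Fin n => S), (∏ k, w (ψ k)) *
        (dev w ψ c i j * dev w ψ c i j' * (dev w ψ c i' j * dev w ψ c i' j')) ≤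
      (if j = j' then 1 else 0) + (if i = i' then 1 else 0) := by
    intro j j' i i'
    by_cases hd : j = j' ∨ i = i'
    · calc _ ≤ ∑ ψ ∈ Fintype.piFinset (fun _ : Fin n × Fin n => S), ∏ k, w (ψ k) := by
            refine Finset.sum_le_sum fun ψ hψ => mul_le_of_le_one_right (hW0 ψ hψ) ?_
            have hb := abs_dev_le w ψ c (hw0 c hc) hc1
            refine (le_abs_self _).trans ?_
            simp only [abs_mul]
            exact mul_le_one₀ (mul_le_one₀ (hb _ _) (abs_nonneg _) (hb _ _)) (by positivity)
              (mul_le_one₀ (hb _ _) (abs_nonneg _) (hb _ _))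
        _ = 1 := hW1
        _ ≤ _ := by
            rcases hd with hd | hd <;> simp only [hd, if_true] <;> split_ifs <;> norm_num
    · push Not at hd
      rw [if_neg hd.1, if_neg hd.2, add_zero]
      by_cases hlt : i < j ∧ i < j' ∧ i' < j ∧ i' < j'
      · obtain ⟨a1, a2, a3, a4⟩ := hlt
        refine (le_of_eq ?_)
        rw [← sum_weight_mul S w (e₁ := (i, j)) (e₂ := (i, j')) (e₃ := (i', j)) (e₄ := (i', j'))
          (by simp [hd.1]) (by simp [hd.2]) (by simp [hd.1])
          (fun s => (if s = c then 1 else 0) - w c)]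
        · simp only [dev, a1, a2, a3, a4, if_true, mul_assoc]
        · simp only [mul_sub, Finset.sum_sub_distrib, ← Finset.sum_mul, hw1]
          simp [hc]
      · refine (le_of_eq (Finset.sum_eq_zero fun ψ _ => ?_))
        simp only [not_and_or] at hlt
        rcases hlt with h | h | h | h <;> simp [dev, h]
  have hexp : ∀ ψ : Fin n × Fin n → ℕ, (∏ k, w (ψ k)) * fourCycle w ψ c =
      ∑ j, ∑ j', ∑ i, ∑ i', (∏ k, w (ψ k)) *
        (dev w ψ c i j * dev w ψ c i j' * (dev w ψ c i' j * dev w ψ c i' j')) := by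
    intro ψ
    simp only [fourCycle, sq, Finset.sum_mul_sum]
    simp only [Finset.mul_sum]
  simp only [hexp]
  calc _ = ∑ j, ∑ j', ∑ i, ∑ i', ∑ ψ ∈ Fintype.piFinset (fun _ : Fin n × Fin n => S),
        (∏ k, w (ψ k)) *
        (dev w ψ c i j * dev w ψ c i j' * (dev w ψ c i' j * dev w ψ c i' j')) := by
        rw [Finset.sum_comm]; refine Finset.sum_congr rfl fun _ _ => ?_
        rw [Finset.sum_comm]; refine Finset.sum_congr rfl fun _ _ => ?_
        rw [Finset.sum_comm]; refine Finset.sum_congr rfl fun _ _ => ?_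
        rw [Finset.sum_comm]
    _ ≤ ∑ j : Fin n, ∑ j' : Fin n, ∑ i : Fin n, ∑ i' : Fin n,
        (((if j = j' then 1 else 0) + (if i = i' then 1 else 0) : ℝ)) :=
        Finset.sum_le_sum fun _ _ => Finset.sum_le_sum fun _ _ =>
          Finset.sum_le_sum fun _ _ => Finset.sum_le_sum fun _ _ => hterm _ _ _ _
    _ = 2 * (n : ℝ) ^ 3 := by
        simp [Finset.sum_add_distrib]
        ring

theorem exists_le_of_weighted_sum {α : Type*} (T : Finset α) (W Q : α → ℝ) (B : ℝ)
    (hW : ∀ t ∈ T, 0 ≤ W t) (h1 : ∑ t ∈ T, W t = 1) (hQ : ∑ t ∈ T, W t * Q t ≤ B) :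
    ∃ t ∈ T, Q t ≤ B := by
  by_contra! hcon
  have : ∑ t ∈ T, W t * B < ∑ t ∈ T, W t * Q t := by
    have hpos : ∃ t ∈ T, 0 < W t := by
      by_contra! h
      have := Finset.sum_nonpos h
      linarith
    obtain ⟨t, ht, htp⟩ := hpos
    exact Finset.sum_lt_sum (fun t ht => mul_le_mul_of_nonneg_left (hcon t ht).le (hW t ht))
      ⟨t, ht, mul_lt_mul_of_pos_left (hcon t ht) htp⟩
  rw [← Finset.sum_mul, h1] at this
  linarith

/-- For large `n` some colouring of the pairs has all its colour classes quasirandom: the graph of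
colour `c` differs from the constant density `w c` by a matrix of cut norm at most `ε n²`. -/
theorem exists_colouring (S : Finset ℕ) (w : ℕ → ℝ) (hw0 : ∀ s ∈ S, 0 ≤ w s)
    (hw1 : ∑ s ∈ S, w s = 1) (ε : ℝ) (hε : 0 < ε) (n : ℕ) (hn : 2 * (S.card : ℝ) / ε ^ 4 ≤ n) :
    ∃ ψ : ℕ → ℕ → ℕ, (∀ i j, ψ i j ∈ S) ∧ ∀ c ∈ S, CutBound n (ε * (n : ℝ) ^ 2)
      (fun i j => if i < j then (if ψ i j = c then 1 else 0) - w c else 0) := by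
  have hSne : S.Nonempty := by
    rw [Finset.nonempty_iff_ne_empty]
    rintro rfl
    simp at hw1
  obtain ⟨s₀, hs₀⟩ := hSne
  obtain ⟨ψ, hψ, hQ⟩ := exists_le_of_weighted_sum (Fintype.piFinset (fun _ : Fin n × Fin n => S))
    (fun ψ => ∏ k, w (ψ k)) (fun ψ => ∑ c ∈ S, fourCycle w ψ c) (2 * S.card * (n : ℝ) ^ 3)
    (fun ψ hψ => Finset.prod_nonneg fun k _ => hw0 _ (Fintype.mem_piFinset.1 hψ k))
    (by
      rw [← Finset.prod_univ_sum (fun _ : Fin n × Fin n => S) (fun _ s => w s)]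
      simp [hw1])
    (by
      simp only [Finset.mul_sum]
      rw [Finset.sum_comm]
      refine (Finset.sum_le_sum fun c hc => sum_weight_fourCycle_le S w hw0 hw1 n hc).trans ?_
      simp only [Finset.sum_const, nsmul_eq_mul]
      exact le_of_eq (by ring))
  refine ⟨fun i j => if h : i < n ∧ j < n then ψ (⟨i, h.1⟩, ⟨j, h.2⟩) else s₀, ?_, ?_⟩
  · intro i j
    dsimp only
    split_ifs
    · exact Fintype.mem_piFinset.1 hψ _
    · exact hs₀
  · intro c hc u v hu hv
    have hQc : fourCycle w ψ c ≤ 2 * S.card * (n : ℝ) ^ 3 :=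
      (Finset.single_le_sum (f := fun c => fourCycle w ψ c)
        (fun c _ => fourCycle_nonneg w ψ c) hc).trans hQ
    have h4 := sum_pow_four_le n (dev w ψ c) (fun i => u i) (fun j => v j)
      (fun i => hu i) (fun j => hv j)
    simp only [Finset.sum_range, Fin.is_lt, and_self, dite_true, Fin.eta, Fin.val_fin_lt]
    change |∑ i : Fin n, ∑ j : Fin n, dev w ψ c i j * u i * v j| ≤ _
    rw [← pow_le_pow_iff_left₀ (abs_nonneg _) (by positivity) (four_ne_zero),
      Even.pow_abs (by decide)]
    calc _ ≤ (n : ℝ) ^ 4 * fourCycle w ψ c := h4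
      _ ≤ (n : ℝ) ^ 4 * (2 * S.card * (n : ℝ) ^ 3) := by gcongr
      _ = (2 * S.card) * (n : ℝ) ^ 7 := by ring
      _ ≤ (n * ε ^ 4) * (n : ℝ) ^ 7 := by
          refine mul_le_mul_of_nonneg_right ?_ (by positivity)
          exact (div_le_iff₀ (by positivity)).1 hn
      _ = _ := by ring

/-! ### From cut norms to counting triples -/

/-- Counting lemma: in a sum over a vertex `x` and a pair `y z` with arbitrary bounded weights,
each of the kernels `M x y` and `M' x z` may be replaced by one that is close in cut norm. -/
theorem CutBound.triple {n : ℕ} {δ : ℝ} {M M' N N' : ℕ → ℕ → ℝ} {X : ℕ → ℝ} {p : ℕ → ℕ → ℝ}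
    (hM : CutBound n δ (fun x y => M x y - N x y))
    (hM' : CutBound n δ (fun x y => M' x y - N' x y))
    (hM1 : ∀ x z, |M' x z| ≤ 1) (hN1 : ∀ x y, |N x y| ≤ 1)
    (hX : ∀ x, |X x| ≤ 1) (hp : ∀ y z, |p y z| ≤ 1) :
    |∑ x ∈ range n, ∑ y ∈ range n, ∑ z ∈ range n,
      X x * p y z * (M x y * M' x z - N x y * N' x z)| ≤ 2 * n * δ := by
  have hsplit : ∑ x ∈ range n, ∑ y ∈ range n, ∑ z ∈ range n,
      X x * p y z * (M x y * M' x z - N x y * N' x z) =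
      ∑ z ∈ range n, (∑ x ∈ range n, ∑ y ∈ range n,
        (M x y - N x y) * (X x * M' x z) * p y z) +
      ∑ y ∈ range n, (∑ x ∈ range n, ∑ z ∈ range n,
        (M' x z - N' x z) * (X x * N x y) * p y z) := by
    rw [Finset.sum_comm (s := range n) (t := range n) (f := fun z x => ∑ y ∈ range n,
        (M x y - N x y) * (X x * M' x z) * p y z),
      Finset.sum_comm (s := range n) (t := range n) (f := fun y x => ∑ z ∈ range n,
        (M' x z - N' x z) * (X x * N x y) * p y z), ← Finset.sum_add_distrib]
    refine Finset.sum_congr rfl fun x _ => ?_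
    rw [Finset.sum_comm (s := range n) (t := range n) (f := fun z y =>
        (M x y - N x y) * (X x * M' x z) * p y z), ← Finset.sum_add_distrib]
    refine Finset.sum_congr rfl fun y _ => ?_
    rw [← Finset.sum_add_distrib]
    exact Finset.sum_congr rfl fun z _ => by ring
  -- For fixed `z` (resp. `y`), all remaining factors depend on one vertex only.
  have hb : ∀ a b : ℝ, |a| ≤ 1 → |b| ≤ 1 → |a * b| ≤ 1 := fun a b ha hb => by
    rw [abs_mul]; exact mul_le_one₀ ha (abs_nonneg _) hb
  have h1 : |∑ z ∈ range n, (∑ x ∈ range n, ∑ y ∈ range n,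
      (M x y - N x y) * (X x * M' x z) * p y z)| ≤ n * δ := by
    refine (Finset.abs_sum_le_sum_abs _ _).trans ((Finset.sum_le_sum fun z _ =>
      hM (fun x => X x * M' x z) (fun y => p y z) (fun x => hb _ _ (hX x) (hM1 x z))
        (fun y => hp y z)).trans ?_)
    simp
  have h2 : |∑ y ∈ range n, (∑ x ∈ range n, ∑ z ∈ range n,
      (M' x z - N' x z) * (X x * N x y) * p y z)| ≤ n * δ := by
    refine (Finset.abs_sum_le_sum_abs _ _).trans ((Finset.sum_le_sum fun y _ =>
      hM' (fun x => X x * N x y) (fun z => p y z) (fun x => hb _ _ (hX x) (hN1 x y))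
        (fun z => hp y z)).trans ?_)
    simp
  rw [hsplit]
  refine (abs_add_le _ _).trans ?_
  linarith

/-- The count of good triples in one of the three relative positions of `x` and `y < z`. The
coordinate `κ₀` of a palette triple belongs to the pair `y z`, while `κ₁` and `κ₂` belong to `x y`
and `x z`. The kernels `A c` and `B c` indicate that these pairs have colour `c` and the order
required by the position, and `α`, `β` indicate the order alone. -/
theorem position_bound (P : Finset (ℕ × ℕ × ℕ)) (ψ : ℕ → ℕ → ℕ) (κ₀ κ₁ κ₂ : ℕ × ℕ × ℕ → ℕ)
    (w : ℕ → ℝ) {n : ℕ} {δ l : ℝ} {A B : ℕ → ℕ → ℕ → ℝ} {α β : ℕ → ℕ → ℝ} {X : ℕ → ℝ}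
    {p : ℕ → ℕ → ℝ}
    (hA : ∀ q ∈ P, CutBound n δ (fun x y => A (κ₁ q) x y - w (κ₁ q) * α x y))
    (hB : ∀ q ∈ P, CutBound n δ (fun x y => B (κ₂ q) x y - w (κ₂ q) * β x y))
    (hB1 : ∀ c x z, |B c x z| ≤ 1) (hw : ∀ q ∈ P, 0 ≤ w (κ₁ q) ∧ w (κ₁ q) ≤ 1)
    (hα0 : ∀ x y, 0 ≤ α x y) (hα1 : ∀ x y, α x y ≤ 1) (hβ0 : ∀ x y, 0 ≤ β x y)
    (hX0 : ∀ x, 0 ≤ X x) (hX1 : ∀ x, X x ≤ 1) (hp0 : ∀ y z, 0 ≤ p y z) (hp1 : ∀ y z, p y z ≤ 1)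
    (hl : ∀ y z, l ≤ ∑ q ∈ P with κ₀ q = ψ y z, w (κ₁ q) * w (κ₂ q)) :
    l * (∑ x ∈ range n, ∑ y ∈ range n, ∑ z ∈ range n, X x * p y z * (α x y * β x z)) -
      P.card * (2 * n * δ) ≤
    ∑ x ∈ range n, ∑ y ∈ range n, ∑ z ∈ range n, X x * p y z *
      ∑ q ∈ P, (if κ₀ q = ψ y z then 1 else 0) * (A (κ₁ q) x y * B (κ₂ q) x z) := by
  have h1 : l * (∑ x ∈ range n, ∑ y ∈ range n, ∑ z ∈ range n, X x * p y z * (α x y * β x z)) ≤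
      ∑ x ∈ range n, ∑ y ∈ range n, ∑ z ∈ range n, X x * p y z * (α x y * β x z) *
        ∑ q ∈ P with κ₀ q = ψ y z, w (κ₁ q) * w (κ₂ q) := by
    simp only [Finset.mul_sum (a := l)]
    refine Finset.sum_le_sum fun x _ => Finset.sum_le_sum fun y _ => Finset.sum_le_sum fun z _ => ?_
    rw [mul_comm]
    exact mul_le_mul_of_nonneg_left (hl y z)
      (mul_nonneg (mul_nonneg (hX0 _) (hp0 _ _)) (mul_nonneg (hα0 _ _) (hβ0 _ _)))
  have h2 : (∑ x ∈ range n, ∑ y ∈ range n, ∑ z ∈ range n, X x * p y z * (α x y * β x z) *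
        ∑ q ∈ P with κ₀ q = ψ y z, w (κ₁ q) * w (κ₂ q)) -
      (∑ x ∈ range n, ∑ y ∈ range n, ∑ z ∈ range n, X x * p y z *
      ∑ q ∈ P, (if κ₀ q = ψ y z then 1 else 0) * (A (κ₁ q) x y * B (κ₂ q) x z)) =
      - ∑ q ∈ P, ∑ x ∈ range n, ∑ y ∈ range n, ∑ z ∈ range n,
        X x * (p y z * if κ₀ q = ψ y z then 1 else 0) *
        (A (κ₁ q) x y * B (κ₂ q) x z - (w (κ₁ q) * α x y) * (w (κ₂ q) * β x z)) := by
    rw [Finset.sum_comm (s := P), ← Finset.sum_neg_distrib, ← Finset.sum_sub_distrib]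
    refine Finset.sum_congr rfl fun x _ => ?_
    rw [Finset.sum_comm (s := P), ← Finset.sum_neg_distrib, ← Finset.sum_sub_distrib]
    refine Finset.sum_congr rfl fun y _ => ?_
    rw [Finset.sum_comm (s := P), ← Finset.sum_neg_distrib, ← Finset.sum_sub_distrib]
    refine Finset.sum_congr rfl fun z _ => ?_
    rw [Finset.sum_filter, Finset.mul_sum, Finset.mul_sum, ← Finset.sum_neg_distrib,
      ← Finset.sum_sub_distrib]
    refine Finset.sum_congr rfl fun q _ => ?_
    split_ifs <;> ring
  have h3 : |∑ q ∈ P, ∑ x ∈ range n, ∑ y ∈ range n, ∑ z ∈ range n,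
        X x * (p y z * if κ₀ q = ψ y z then 1 else 0) *
        (A (κ₁ q) x y * B (κ₂ q) x z - (w (κ₁ q) * α x y) * (w (κ₂ q) * β x z))| ≤
      P.card * (2 * n * δ) := by
    refine (Finset.abs_sum_le_sum_abs _ _).trans ((Finset.sum_le_sum fun q hq =>
      CutBound.triple (p := fun y z => p y z * if κ₀ q = ψ y z then 1 else 0)
        (hA q hq) (hB q hq) (hB1 _) ?_ ?_ ?_).trans ?_)
    · intro x y
      rw [abs_of_nonneg (mul_nonneg (hw q hq).1 (hα0 _ _))]
      exact mul_le_one₀ (hw q hq).2 (hα0 _ _) (hα1 _ _)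
    · intro x
      rw [abs_of_nonneg (hX0 x)]
      exact hX1 x
    · intro y z
      split_ifs
      · rw [mul_one, abs_of_nonneg (hp0 _ _)]
        exact hp1 _ _
      · simp
    · simp
  have := neg_abs_le (∑ q ∈ P, ∑ x ∈ range n, ∑ y ∈ range n, ∑ z ∈ range n,
        X x * (p y z * if κ₀ q = ψ y z then 1 else 0) *
        (A (κ₁ q) x y * B (κ₂ q) x z - (w (κ₁ q) * α x y) * (w (κ₂ q) * β x z)))
  linarith

/-! ### The hypergraph of a palette and a colouring -/

theorem sorted_triple_unique {i j k i' j' k' : ℕ} (h₁ : i < j) (h₂ : j < k) (h₁' : i' < j')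
    (h₂' : j' < k') (h : ({i, j, k} : Finset ℕ) = {i', j', k'}) : i = i' ∧ j = j' ∧ k = k' := by
  have hm : ∀ t, (t = i ∨ t = j ∨ t = k) ↔ (t = i' ∨ t = j' ∨ t = k') := fun t => by
    simpa using congrArg (t ∈ ·) h
  have a := (hm i).1 (by simp)
  have b := (hm j).1 (by simp)
  have c := (hm k).1 (by simp)
  have a' := (hm i').2 (by simp)
  have b' := (hm j').2 (by simp)
  have c' := (hm k').2 (by simp)
  omega

open Classical in
/-- The 3-graph on `{0, …, n - 1}` whose edges are the triples `i < j < k` with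
`(ψ i j, ψ j k, ψ i k) ∈ P`. -/
noncomputable def paletteGraph (P : Palette) (ψ : ℕ → ℕ → ℕ) (n : ℕ) : ThreeGraph where
  verts := range n
  edges := ((range n).powersetCard 3).filter fun e =>
    ∃ i j k, i < j ∧ j < k ∧ e = {i, j, k} ∧ (ψ i j, ψ j k, ψ i k) ∈ P
  edge_sub _ he := (mem_powersetCard.1 (mem_filter.1 he).1).1
  edge_card _ he := (mem_powersetCard.1 (mem_filter.1 he).1).2

theorem mem_edges_paletteGraph {P : Palette} {ψ : ℕ → ℕ → ℕ} {n i j k : ℕ} (h₁ : i < j)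
    (h₂ : j < k) : ({i, j, k} : Finset ℕ) ∈ (paletteGraph P ψ n).edges ↔
      k < n ∧ (ψ i j, ψ j k, ψ i k) ∈ P := by
  simp only [paletteGraph, mem_filter, mem_powersetCard]
  constructor
  · rintro ⟨⟨hs, -⟩, i', j', k', h₁', h₂', he, hP⟩
    obtain ⟨rfl, rfl, rfl⟩ := sorted_triple_unique h₁ h₂ h₁' h₂' he
    exact ⟨mem_range.1 (hs (by simp)), hP⟩
  · rintro ⟨hk, hP⟩
    refine ⟨⟨?_, ?_⟩, i, j, k, h₁, h₂, rfl, hP⟩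
    · intro t ht
      simp only [mem_insert, mem_singleton] at ht
      rw [mem_range]
      omega
    · rw [card_eq_three]
      exact ⟨i, j, k, h₁.ne, (h₁.trans h₂).ne, h₂.ne, rfl⟩

/-- Subhypergraphs of `paletteGraph P ψ n` satisfy `P`: pull the order and the colouring back
along the embedding. -/
theorem satisfies_of_isSubhypergraph {P : Palette} {ψ : ℕ → ℕ → ℕ} {n : ℕ} {F : ThreeGraph}
    (hψ : ∀ i j, ψ i j ∈ palColours P) (hF : IsSubhypergraph F (paletteGraph P ψ n)) :
    Satisfies F P := by
  obtain ⟨f, hinj, -, hedge⟩ := hF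
  -- The colour of a pair `s` is `ψ` at the smaller and the larger element of its image.
  refine ⟨f, fun s => ψ (sInf (f '' s)) (sSup (f '' s)), hinj, fun _ _ _ _ _ => hψ _ _, ?_⟩
  intro u v w he huv hvw
  have hpair : ∀ {a b : ℕ}, f a < f b →
      sInf (f '' (({a, b} : Finset ℕ) : Set ℕ)) = f a ∧
      sSup (f '' (({a, b} : Finset ℕ) : Set ℕ)) = f b := by
    intro a b hab
    simp only [coe_insert, coe_singleton, Set.image_pair, csInf_pair, csSup_pair]
    exact ⟨inf_eq_left.2 hab.le, sup_eq_right.2 hab.le⟩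
  have h' := hedge _ he
  simp only [image_insert, image_singleton] at h'
  simp only [hpair huv, hpair hvw, hpair (huv.trans hvw)]
  exact ((mem_edges_paletteGraph huv hvw).1 h').2

/-- Every pair in `R` is counted through its increasing enumeration. -/
theorem card_le_sum_pairs {n : ℕ} {R : Finset (Finset ℕ)}
    (hR : ∀ p ∈ R, p ⊆ range n ∧ p.card = 2) :
    (R.card : ℝ) ≤ ∑ y ∈ range n, ∑ z ∈ range n,
      if y < z ∧ ({y, z} : Finset ℕ) ∈ R then (1 : ℝ) else 0 := by
  rw [← Finset.sum_product', Finset.sum_boole, Nat.cast_le]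
  refine Finset.card_le_card_of_surjOn (fun q : ℕ × ℕ => ({q.1, q.2} : Finset ℕ)) ?_
  intro e he
  obtain ⟨hs, hc⟩ := hR e he
  obtain ⟨a, b, hab, rfl⟩ := card_eq_two.1 hc
  have ha := hs (mem_insert_self a _)
  have hb := hs (mem_insert_of_mem (mem_singleton_self b))
  have he' : ({a, b} : Finset ℕ) ∈ R := he
  rcases lt_or_gt_of_ne hab with h | h
  · exact ⟨(a, b), by simp_all, rfl⟩
  · exact ⟨(b, a), by rw [pair_comm] at he'; simp_all, pair_comm _ _⟩

/-- `eEV` counts both orders of the pair; the increasing one alone suffices for a lower bound. -/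
theorem sum_le_eEV (H : ThreeGraph) {n : ℕ} (hn : H.verts = range n) {X : Finset ℕ}
    (hX : X ⊆ H.verts) (R : Finset (Finset ℕ)) :
    (∑ x ∈ range n, ∑ y ∈ range n, ∑ z ∈ range n, (if x ∈ X then (1 : ℝ) else 0) *
      (if y < z ∧ ({y, z} : Finset ℕ) ∈ R then 1 else 0) *
      (if ({x, y, z} : Finset ℕ) ∈ H.edges then 1 else 0)) ≤ eEV H X R := by
  rw [eEV, ← Finset.sum_boole, Finset.sum_product, hn]
  simp only [Finset.sum_product]
  rw [hn] at hX
  rw [← Finset.sum_subset hX]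
  · refine Finset.sum_le_sum fun x hx => Finset.sum_le_sum fun y _ => Finset.sum_le_sum fun z _ => ?_
    rw [if_pos hx]
    split_ifs <;> simp_all
  · intro x _ hx
    simp [hx]

/-- Indicator that `i < j` and the pair has colour `c`. -/
noncomputable def colourKernel (ψ : ℕ → ℕ → ℕ) (c i j : ℕ) : ℝ :=
  if i < j ∧ ψ i j = c then 1 else 0

/-- Indicator of `i < j`. -/
noncomputable def ltKernel (i j : ℕ) : ℝ := if i < j then 1 else 0

theorem abs_colourKernel_le (ψ : ℕ → ℕ → ℕ) (c i j : ℕ) : |colourKernel ψ c i j| ≤ 1 := by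
  unfold colourKernel; split_ifs <;> simp

theorem ltKernel_nonneg (i j : ℕ) : 0 ≤ ltKernel i j := by
  unfold ltKernel; split_ifs <;> simp

theorem ltKernel_le_one (i j : ℕ) : ltKernel i j ≤ 1 := by
  unfold ltKernel; split_ifs <;> simp

/-- A triple is an edge as soon as its colours form a palette triple in the position determined by
the order: `x < y < z`, `y < x < z` and `y < z < x` respectively. -/
theorem edge_indicator_ge (P : Palette) (ψ : ℕ → ℕ → ℕ) {n x y z : ℕ} (hx : x < n) (hz : z < n)
    (hyz : y < z) :
    (∑ q ∈ P, (if q.2.1 = ψ y z then (1 : ℝ) else 0) *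
        (colourKernel ψ q.1 x y * colourKernel ψ q.2.2 x z)) +
      (∑ q ∈ P, (if q.2.2 = ψ y z then (1 : ℝ) else 0) *
        (colourKernel ψ q.1 y x * colourKernel ψ q.2.1 x z)) +
      (∑ q ∈ P, (if q.1 = ψ y z then (1 : ℝ) else 0) *
        (colourKernel ψ q.2.2 y x * colourKernel ψ q.2.1 z x)) ≤
      if ({x, y, z} : Finset ℕ) ∈ (paletteGraph P ψ n).edges then 1 else 0 := by
  have e1 : (∑ q ∈ P, (if q.2.1 = ψ y z then (1 : ℝ) else 0) *
        (colourKernel ψ q.1 x y * colourKernel ψ q.2.2 x z)) =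
      if x < y ∧ (ψ x y, ψ y z, ψ x z) ∈ P then 1 else 0 := by
    rw [show (if x < y ∧ (ψ x y, ψ y z, ψ x z) ∈ P then (1 : ℝ) else 0) =
      ∑ q ∈ P, if q = (ψ x y, ψ y z, ψ x z) then (if x < y then 1 else 0) else 0 by
        rw [Finset.sum_ite_eq']; split_ifs <;> simp_all]
    refine Finset.sum_congr rfl fun q _ => ?_
    simp only [colourKernel, Prod.ext_iff]
    split_ifs <;> first | simp; done | (exfalso; grind)
  have e2 : (∑ q ∈ P, (if q.2.2 = ψ y z then (1 : ℝ) else 0) *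
        (colourKernel ψ q.1 y x * colourKernel ψ q.2.1 x z)) =
      if (y < x ∧ x < z) ∧ (ψ y x, ψ x z, ψ y z) ∈ P then 1 else 0 := by
    rw [show (if (y < x ∧ x < z) ∧ (ψ y x, ψ x z, ψ y z) ∈ P then (1 : ℝ) else 0) =
      ∑ q ∈ P, if q = (ψ y x, ψ x z, ψ y z) then (if y < x ∧ x < z then 1 else 0) else 0 by
        rw [Finset.sum_ite_eq']; split_ifs <;> simp_all]
    refine Finset.sum_congr rfl fun q _ => ?_
    simp only [colourKernel, Prod.ext_iff]
    split_ifs <;> first | simp; done | (exfalso; grind)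
  have e3 : (∑ q ∈ P, (if q.1 = ψ y z then (1 : ℝ) else 0) *
        (colourKernel ψ q.2.2 y x * colourKernel ψ q.2.1 z x)) =
      if z < x ∧ (ψ y z, ψ z x, ψ y x) ∈ P then 1 else 0 := by
    rw [show (if z < x ∧ (ψ y z, ψ z x, ψ y x) ∈ P then (1 : ℝ) else 0) =
      ∑ q ∈ P, if q = (ψ y z, ψ z x, ψ y x) then (if z < x then 1 else 0) else 0 by
        rw [Finset.sum_ite_eq']; split_ifs <;> simp_all]
    refine Finset.sum_congr rfl fun q _ => ?_
    simp only [colourKernel, Prod.ext_iff]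
    split_ifs <;> first | simp; done | (exfalso; grind)
  rw [e1, e2, e3]
  rcases lt_trichotomy x y with h | h | h
  · simp only [mem_edges_paletteGraph h hyz]
    simp [h, h.not_gt, hz, (h.trans hyz).not_gt]
  · have h1 : ¬ z < y := hyz.not_gt
    subst h
    simp only [lt_irrefl, false_and, if_false, h1, add_zero]
    split_ifs <;> norm_num
  · rcases lt_trichotomy x z with h' | h' | h'
    · rw [Finset.insert_comm]
      simp only [mem_edges_paletteGraph h h']
      simp [h, h.not_gt, h', h'.not_gt, hz]
    · subst h'
      simp only [lt_irrefl, false_and, and_false, if_false, h.not_gt, add_zero]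
      split_ifs <;> norm_num
    · rw [show ({x, y, z} : Finset ℕ) = {y, z, x} by ext; simp; tauto]
      simp only [mem_edges_paletteGraph hyz h']
      simp [h.not_gt, h', h'.not_gt, hx]

/-- The three positions cover all triples apart from the at most `2 n²` with `x = y` or
`x = z`. -/
theorem sum_positions_ge {n : ℕ} {X : Finset ℕ} {R : Finset (Finset ℕ)} (hX : X ⊆ range n)
    (hR : ∀ p ∈ R, p ⊆ range n ∧ p.card = 2) :
    (X.card : ℝ) * R.card - 2 * (n : ℝ) ^ 2 ≤
    ∑ x ∈ range n, ∑ y ∈ range n, ∑ z ∈ range n, (if x ∈ X then (1 : ℝ) else 0) *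
      (if y < z ∧ ({y, z} : Finset ℕ) ∈ R then 1 else 0) *
      (ltKernel x y * ltKernel x z + ltKernel y x * ltKernel x z + ltKernel y x * ltKernel z x) := by
  have hpt : ∀ x y z : ℕ, (if x ∈ X then (1 : ℝ) else 0) *
      (if y < z ∧ ({y, z} : Finset ℕ) ∈ R then 1 else 0) -
      (if x = y then 1 else 0) - (if x = z then 1 else 0) ≤
      (if x ∈ X then (1 : ℝ) else 0) *
      (if y < z ∧ ({y, z} : Finset ℕ) ∈ R then 1 else 0) *
      (ltKernel x y * ltKernel x z + ltKernel y x * ltKernel x z +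
        ltKernel y x * ltKernel z x) := by
    intro x y z
    by_cases hx : x ∈ X
    · by_cases hyz : y < z ∧ ({y, z} : Finset ℕ) ∈ R
      · rw [if_pos hx, if_pos hyz]
        have := hyz.1
        unfold ltKernel
        split_ifs <;> first | (exfalso; omega) | norm_num
      · rw [if_neg hyz]
        split_ifs <;> simp
    · rw [if_neg hx]
      split_ifs <;> simp
  refine le_trans ?_ (Finset.sum_le_sum fun x _ => Finset.sum_le_sum fun y _ =>
    Finset.sum_le_sum fun z _ => hpt x y z)
  simp only [Finset.sum_sub_distrib]
  have h1 : (X.card : ℝ) * R.card ≤ ∑ x ∈ range n, ∑ y ∈ range n, ∑ z ∈ range n,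
      (if x ∈ X then (1 : ℝ) else 0) *
      (if y < z ∧ ({y, z} : Finset ℕ) ∈ R then 1 else 0) := by
    simp only [← Finset.mul_sum]
    rw [← Finset.sum_mul]
    have : (X.card : ℝ) = ∑ x ∈ range n, if x ∈ X then (1 : ℝ) else 0 := by
      rw [Finset.sum_boole, Finset.filter_mem_eq_inter, Finset.inter_eq_right.2 hX]
    rw [← this]
    exact mul_le_mul_of_nonneg_left (card_le_sum_pairs hR) (Nat.cast_nonneg _)
  have h2 : ∑ x ∈ range n, ∑ y ∈ range n, ∑ z ∈ range n, (if x = y then (1 : ℝ) else 0) =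
      (n : ℝ) ^ 2 := by
    rw [Finset.sum_congr rfl fun x hx => by
      rw [Finset.sum_congr rfl fun y _ => Finset.sum_const _, ← Finset.smul_sum,
        Finset.sum_ite_eq, if_pos hx]]
    simp [sq]
  have h3 : ∑ x ∈ range n, ∑ y ∈ range n, ∑ z ∈ range n, (if x = z then (1 : ℝ) else 0) =
      (n : ℝ) ^ 2 := by
    rw [Finset.sum_congr rfl fun x hx => Finset.sum_congr rfl fun y _ => by
      rw [Finset.sum_ite_eq, if_pos hx]]
    simp [sq]
  linarith

/-! ### Density of the construction -/

theorem palColours_mem {P : Palette} {q : ℕ × ℕ × ℕ} (hq : q ∈ P) :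
    q.1 ∈ palColours P ∧ q.2.1 ∈ palColours P ∧ q.2.2 ∈ palColours P := by
  simp only [palColours, mem_union, mem_image]
  exact ⟨Or.inl (Or.inl ⟨q, hq, rfl⟩), Or.inl (Or.inr ⟨q, hq, rfl⟩), Or.inr ⟨q, hq, rfl⟩⟩

theorem IsWeighting.le_one {P : Palette} {x : ℕ → ℝ} (hx : IsWeighting P x) {a : ℕ}
    (ha : a ∈ palColours P) : x a ≤ 1 :=
  hx.2 ▸ Finset.single_le_sum hx.1 ha

theorem lamDeg_nonneg {P : Palette} {x : ℕ → ℝ} (hx : IsWeighting P x) (a : ℕ) :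
    0 ≤ lamDeg P a x := by
  have h : ∀ q ∈ P, 0 ≤ x q.1 ∧ 0 ≤ x q.2.1 ∧ 0 ≤ x q.2.2 := fun q hq =>
    ⟨hx.1 _ (palColours_mem hq).1, hx.1 _ (palColours_mem hq).2.1, hx.1 _ (palColours_mem hq).2.2⟩
  refine le_min (le_min ?_ ?_) ?_ <;> refine Finset.sum_nonneg fun q hq => ?_ <;>
    obtain ⟨h1, h2, h3⟩ := h q (mem_filter.1 hq).1 <;> positivity

/-- The sum over palette triples with first entry `a` is a partial sum of
`(∑ c, x c) * (∑ d, x d) = 1`. -/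
theorem lamDeg_le_one {P : Palette} {x : ℕ → ℝ} (hx : IsWeighting P x) (a : ℕ) :
    lamDeg P a x ≤ 1 := by
  refine (min_le_left _ _).trans ((min_le_left _ _).trans ?_)
  have h1 : ∑ r ∈ palColours P ×ˢ palColours P, x r.1 * x r.2 = 1 := by
    rw [Finset.sum_product, ← Finset.sum_mul_sum, hx.2, one_mul]
  rw [← h1]
  have hinj : Set.InjOn (fun q : ℕ × ℕ × ℕ => q.2) (P.filter (fun q => q.1 = a) : Finset _) := by
    intro q hq q' hq' h
    have e := (mem_filter.1 hq).2
    have e' := (mem_filter.1 hq').2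
    exact Prod.ext (e.trans e'.symm) h
  rw [← Finset.sum_image (f := fun r : ℕ × ℕ => x r.1 * x r.2) hinj]
  refine Finset.sum_le_sum_of_subset_of_nonneg ?_ ?_
  · intro r hr
    obtain ⟨q, hq, rfl⟩ := mem_image.1 hr
    have := palColours_mem (mem_filter.1 hq).1
    exact mem_product.2 ⟨this.2.1, this.2.2⟩
  · intro r hr _
    obtain ⟨ha, hb⟩ := mem_product.1 hr
    exact mul_nonneg (hx.1 _ ha) (hx.1 _ hb)

theorem lamEV_le_lamDeg {P : Palette} {x : ℕ → ℝ} (hx : IsWeighting P x) {a : ℕ}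
    (ha : a ∈ palColours P) (hxa : 0 < x a) : lamEV P x ≤ lamDeg P a x :=
  csInf_le ⟨0, by rintro _ ⟨b, -, -, rfl⟩; exact lamDeg_nonneg hx b⟩ ⟨a, ha, hxa, rfl⟩

theorem lamEV_nonneg {P : Palette} {x : ℕ → ℝ} (hx : IsWeighting P x) : 0 ≤ lamEV P x :=
  Real.sInf_nonneg (by rintro _ ⟨b, -, -, rfl⟩; exact lamDeg_nonneg hx b)

theorem lamEV_le_one {P : Palette} {x : ℕ → ℝ} (hx : IsWeighting P x) : lamEV P x ≤ 1 := by
  have : ∃ a ∈ palColours P, 0 < x a := by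
    by_contra! h
    have := Finset.sum_nonpos h
    linarith [hx.2]
  obtain ⟨a, ha, hxa⟩ := this
  exact (lamEV_le_lamDeg hx ha hxa).trans (lamDeg_le_one hx a)

/-- If every colour class is quasirandom with density `x c`, and only colours of positive weight
occur, then the palette hypergraph has density `lamEV P x`: a pair of colour `a` in any position
extends to an edge with density at least `lamDeg P a x`. -/
theorem isDenseEV_paletteGraph {P : Palette} {x : ℕ → ℝ} (hx : IsWeighting P x)
    {ψ : ℕ → ℕ → ℕ} (hψ : ∀ i j, ψ i j ∈ palColours P ∧ 0 < x (ψ i j)) {n : ℕ} {δ η : ℝ}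
    (hcut : ∀ c ∈ palColours P,
      CutBound n δ (fun i j => colourKernel ψ c i j - x c * ltKernel i j))
    (hη : 2 * (n : ℝ) ^ 2 + 6 * P.card * n * δ ≤ η * (n : ℝ) ^ 3) :
    IsDenseEV (paletteGraph P ψ n) (lamEV P x) η := by
  intro X R hX hR
  set l := lamEV P x with hl
  have hl0 : 0 ≤ l := lamEV_nonneg hx
  have hl1 : l ≤ 1 := lamEV_le_one hx
  change X ⊆ range n at hX
  change ∀ p ∈ R, p ⊆ range n ∧ p.card = 2 at hR
  have hle : ∀ y z, l ≤ lamDeg P (ψ y z) x := fun y z =>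
    lamEV_le_lamDeg hx (hψ y z).1 (hψ y z).2
  set χ : ℕ → ℝ := fun t => if t ∈ X then (1 : ℝ) else 0 with hχ
  set p : ℕ → ℕ → ℝ := fun y z => if y < z ∧ ({y, z} : Finset ℕ) ∈ R then 1 else 0 with hp
  have hχ0 : ∀ t, 0 ≤ χ t := fun t => by simp only [hχ]; split_ifs <;> simp
  have hχ1 : ∀ t, χ t ≤ 1 := fun t => by simp only [hχ]; split_ifs <;> simp
  have hp0 : ∀ y z, 0 ≤ p y z := fun y z => by simp only [hp]; split_ifs <;> simp
  have hp1 : ∀ y z, p y z ≤ 1 := fun y z => by simp only [hp]; split_ifs <;> simp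
  have hw : ∀ c ∈ palColours P, 0 ≤ x c ∧ x c ≤ 1 := fun c hc => ⟨hx.1 c hc, hx.le_one hc⟩
  have b1 := position_bound P ψ (fun q => q.2.1) (fun q => q.1) (fun q => q.2.2) x
    (n := n) (δ := δ) (l := l) (A := fun c s t => colourKernel ψ c s t)
    (B := fun c s t => colourKernel ψ c s t)
    (α := fun s t => ltKernel s t) (β := fun s t => ltKernel s t) (X := χ) (p := p)
    (fun q hq => hcut _ (palColours_mem hq).1) (fun q hq => hcut _ (palColours_mem hq).2.2)
    (fun c s t => abs_colourKernel_le ψ c s t) (fun q hq => hw _ (palColours_mem hq).1)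
    (fun s t => ltKernel_nonneg s t) (fun s t => ltKernel_le_one s t)
    (fun s t => ltKernel_nonneg s t) hχ0 hχ1 hp0 hp1
    (fun y z => (hle y z).trans ((min_le_left _ _).trans (min_le_right _ _)))
  have b2 := position_bound P ψ (fun q => q.2.2) (fun q => q.1) (fun q => q.2.1) x
    (n := n) (δ := δ) (l := l) (A := fun c s t => colourKernel ψ c t s)
    (B := fun c s t => colourKernel ψ c s t)
    (α := fun s t => ltKernel t s) (β := fun s t => ltKernel s t) (X := χ) (p := p)
    (fun q hq => (hcut _ (palColours_mem hq).1).transpose)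
    (fun q hq => hcut _ (palColours_mem hq).2.1)
    (fun c s t => abs_colourKernel_le ψ c s t) (fun q hq => hw _ (palColours_mem hq).1)
    (fun s t => ltKernel_nonneg t s) (fun s t => ltKernel_le_one t s)
    (fun s t => ltKernel_nonneg s t) hχ0 hχ1 hp0 hp1
    (fun y z => (hle y z).trans (min_le_right _ _))
  have b3 := position_bound P ψ (fun q => q.1) (fun q => q.2.2) (fun q => q.2.1) x
    (n := n) (δ := δ) (l := l) (A := fun c s t => colourKernel ψ c t s)
    (B := fun c s t => colourKernel ψ c t s)
    (α := fun s t => ltKernel t s) (β := fun s t => ltKernel t s) (X := χ) (p := p)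
    (fun q hq => (hcut _ (palColours_mem hq).2.2).transpose)
    (fun q hq => (hcut _ (palColours_mem hq).2.1).transpose)
    (fun c s t => abs_colourKernel_le ψ c t s) (fun q hq => hw _ (palColours_mem hq).2.2)
    (fun s t => ltKernel_nonneg t s) (fun s t => ltKernel_le_one t s)
    (fun s t => ltKernel_nonneg t s) hχ0 hχ1 hp0 hp1
    (fun y z => (hle y z).trans ((min_le_left _ _).trans
      ((min_le_left _ _).trans (le_of_eq (Finset.sum_congr rfl fun q _ => mul_comm _ _)))))
  have hsum := sum_le_eEV (paletteGraph P ψ n) rfl hX R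
  have hpos := mul_le_mul_of_nonneg_left (sum_positions_ge hX hR) hl0
  have hedge : ∀ s ∈ range n, ∀ y ∈ range n, ∀ z ∈ range n,
      χ s * p y z * (∑ q ∈ P, (if q.2.1 = ψ y z then (1 : ℝ) else 0) *
        (colourKernel ψ q.1 s y * colourKernel ψ q.2.2 s z)) +
      χ s * p y z * (∑ q ∈ P, (if q.2.2 = ψ y z then (1 : ℝ) else 0) *
        (colourKernel ψ q.1 y s * colourKernel ψ q.2.1 s z)) +
      χ s * p y z * (∑ q ∈ P, (if q.1 = ψ y z then (1 : ℝ) else 0) *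
        (colourKernel ψ q.2.2 y s * colourKernel ψ q.2.1 z s)) ≤
      χ s * p y z * if ({s, y, z} : Finset ℕ) ∈ (paletteGraph P ψ n).edges then 1 else 0 := by
    intro s hs y _ z hz
    by_cases hyz : y < z
    · rw [← mul_add, ← mul_add]
      exact mul_le_mul_of_nonneg_left
        (edge_indicator_ge P ψ (mem_range.1 hs) (mem_range.1 hz) hyz)
        (mul_nonneg (hχ0 _) (hp0 _ _))
    · have : p y z = 0 := if_neg fun h => hyz h.1
      simp [this]
  have hedge' := Finset.sum_le_sum fun s hs => Finset.sum_le_sum fun y hy =>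
    Finset.sum_le_sum fun z hz => hedge s hs y hy z hz
  simp only [Finset.sum_add_distrib] at hedge'
  simp only [mul_add, Finset.sum_add_distrib, mul_sub] at hpos
  have hn : ((paletteGraph P ψ n).verts.card : ℝ) = n := by simp [paletteGraph]
  rw [hn, ge_iff_le]
  have hl2 : l * (2 * (n : ℝ) ^ 2) ≤ 2 * (n : ℝ) ^ 2 :=
    mul_le_of_le_one_left (by positivity) hl1
  rw [mul_assoc l]
  linarith

theorem exists_dense_paletteGraph {P : Palette} {x : ℕ → ℝ} (hx : IsWeighting P x) {η : ℝ}
    (hη : 0 < η) (m : ℕ) : ∃ (n : ℕ) (ψ : ℕ → ℕ → ℕ), m ≤ n ∧ (∀ i j, ψ i j ∈ palColours P) ∧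
      IsDenseEV (paletteGraph P ψ n) (lamEV P x) η := by
  set S := (palColours P).filter (fun a => 0 < x a) with hS
  have hS1 : ∑ s ∈ S, x s = 1 := by
    rw [← hx.2, hS]
    refine Finset.sum_subset (filter_subset _ _) fun a ha hna => ?_
    have : ¬ 0 < x a := fun h => hna (mem_filter.2 ⟨ha, h⟩)
    exact le_antisymm (not_lt.1 this) (hx.1 a ha)
  -- The counting error is `6 * P.card * ε * n ^ 3`; it and the `2 * n ^ 2` degenerate triples
  -- each get half of `η * n ^ 3`.
  set ε : ℝ := η / (12 * (P.card + 1)) with hεd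
  have hε : 0 < ε := by positivity
  obtain ⟨n, hn⟩ := exists_nat_ge (max (m : ℝ) (max (4 / η) (2 * (S.card : ℝ) / ε ^ 4)))
  have hn1 : (m : ℝ) ≤ n := (le_max_left _ _).trans hn
  have hn2 : 4 / η ≤ n := (le_max_left _ _).trans ((le_max_right _ _).trans hn)
  have hn3 : 2 * (S.card : ℝ) / ε ^ 4 ≤ n := (le_max_right _ _).trans ((le_max_right _ _).trans hn)
  obtain ⟨ψ, hψS, hcut⟩ := exists_colouring S x (fun s hs => (mem_filter.1 hs).2.le) hS1 ε hε n hn3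
  have hψ : ∀ i j, ψ i j ∈ palColours P ∧ 0 < x (ψ i j) := fun i j => mem_filter.1 (hψS i j)
  refine ⟨n, ψ, Nat.cast_le.1 hn1, fun i j => (hψ i j).1,
    isDenseEV_paletteGraph hx hψ (δ := ε * (n : ℝ) ^ 2) ?_ ?_⟩
  · intro c hc
    by_cases hcS : c ∈ S
    · convert hcut c hcS using 3 with i j
      simp only [colourKernel, ltKernel]
      split_ifs <;> simp_all
    -- A colour of weight zero is never used, so its deviation matrix is zero.
    · have hxc : x c = 0 :=
        le_antisymm (not_lt.1 fun h => hcS (mem_filter.2 ⟨hc, h⟩)) (hx.1 c hc)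
      have hz : ∀ i j, colourKernel ψ c i j - x c * ltKernel i j = 0 := fun i j => by
        rw [hxc, zero_mul, sub_zero]
        exact if_neg fun h : i < j ∧ ψ i j = c => hcS (h.2 ▸ hψS i j)
      intro u v _ _
      simp only [hz, zero_mul, Finset.sum_const_zero, abs_zero]
      positivity
  · have h1 : 4 ≤ n * η := (div_le_iff₀ hη).1 hn2
    have h2 : 2 * (n : ℝ) ^ 2 ≤ η / 2 * (n : ℝ) ^ 3 := by
      nlinarith [sq_nonneg (n : ℝ)]
    have h3 : 6 * (P.card : ℝ) * ε ≤ η / 2 := by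
      rw [hεd, ← mul_div_assoc, div_le_iff₀ (by positivity)]
      nlinarith
    have h4 : 6 * (P.card : ℝ) * n * (ε * (n : ℝ) ^ 2) ≤ η / 2 * (n : ℝ) ^ 3 := by
      calc _ = 6 * (P.card : ℝ) * ε * (n : ℝ) ^ 3 := by ring
        _ ≤ _ := by gcongr
    linarith

/-- If no member of a family 𝓕 satisfies the palette 𝒫, then
π_{e↦v}(𝓕) ≥ Λ^{e↦v}_𝒫. -/
theorem palette_lower_bound_EV (P : Palette) (𝓕 : Set ThreeGraph)
    (h : ∀ F ∈ 𝓕, ¬ Satisfies F P) :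
    LambdaEV P ≤ piEV 𝓕 := by
  -- For the empty palette there is no weighting and `LambdaEV P` is `sSup ∅ = 0`.
  refine Real.sSup_le ?_ (Real.sSup_nonneg fun d hd => hd.1)
  rintro _ ⟨x, hx, rfl⟩
  refine le_csSup ⟨1, fun d hd => hd.2.1⟩ ⟨lamEV_nonneg hx, lamEV_le_one hx, fun η hη m => ?_⟩
  obtain ⟨n, ψ, hn, hψ, hdense⟩ := exists_dense_paletteGraph hx hη m
  exact ⟨paletteGraph P ψ n, by simpa [paletteGraph] using hn,
    fun F hF hsub => h F hF (satisfies_of_isSubhypergraph hψ hsub), hdense⟩
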